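/- arXiv:2001.06738 — 2 statements merged into one kernel-verified Lean document; each statement's English description precedes it below -/
import Mathlib

section
/- Let n be a positive integer with n ≡ 2 (mod 4). Define g on the unit circle S^1 ⊆ ℝ² by g(v) = 1 + cos(nθ), where θ is the polar angle of the unit vector v (equivalently, g(v) = 1 + Re((v_1 + i v_2)^n) for v = (v_1, v_2) ∈ S^1). Then g takes values in [0, 2], and g is a Gleason function of weight 2 for the ONBs for ℝ²: for every orthonormal basis {u, v} of ℝ², g(u) + g(v) = 2. -/
/-!
Identify `v ∈ ℝ²` with `z = v₁ + i v₂`. The bounds hold because `|Re (z ^ n)| ≤ |z| ^ n = 1`.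
If `z, w` come from an orthonormal basis then `w = ± i z`, hence `w ^ 2 = -z ^ 2`
(`sq_eq_neg_sq_of_orthonormal`). As `n = 2 m` with `m` odd, `w ^ n = -z ^ n`, and the two real
parts cancel.
-/

/-- The sign ambiguity in `w = ± i z` for orthonormal `z, w` disappears after squaring. -/
lemma sq_eq_neg_sq_of_orthonormal {a b c d : ℝ} (h1 : a ^ 2 + b ^ 2 = 1)
    (h2 : c ^ 2 + d ^ 2 = 1) (h3 : a * c + b * d = 0) :
    ((c : ℂ) + (d : ℂ) * Complex.I) ^ 2 = -((a : ℂ) + (b : ℂ) * Complex.I) ^ 2 := by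
  have hc : c ^ 2 = b ^ 2 := by
    linear_combination (-c ^ 2) * h1 + b ^ 2 * h2 + (a * c - b * d) * h3
  have hcd : c * d = -(a * b) := by
    linear_combination (-c * d) * h1 - a * b * h2 + (a * d + b * c) * h3
  apply Complex.ext
  · simp [pow_two]
    linarith
  · simp [pow_two]
    linarith

/-- For a positive integer `n ≡ 2 (mod 4)`, the function
`g(v) = 1 + cos(nθ) = 1 + Re((v₁ + i v₂)^n)` on the unit circle `S¹ ⊆ ℝ²`
takes values in `[0, 2]` and is a Gleason function of weight `2` for the ONBs of `ℝ²`. -/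
theorem stmt_2 (n : ℕ) (hn : 0 < n) (hmod : n % 4 = 2)
    (g : EuclideanSpace ℝ (Fin 2) → ℝ)
    (hg : ∀ v : EuclideanSpace ℝ (Fin 2), ‖v‖ = 1 →
      g v = 1 + (((v 0 : ℂ) + (v 1 : ℂ) * Complex.I) ^ n).re) :
    (∀ v : EuclideanSpace ℝ (Fin 2), ‖v‖ = 1 → 0 ≤ g v ∧ g v ≤ 2) ∧
    (∀ b : OrthonormalBasis (Fin 2) ℝ (EuclideanSpace ℝ (Fin 2)),
      g (b 0) + g (b 1) = 2) := by
  have hsq : ∀ v : EuclideanSpace ℝ (Fin 2), ‖v‖ = 1 → v 0 ^ 2 + v 1 ^ 2 = 1 := by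
    intro v hv
    have h := EuclideanSpace.real_norm_sq_eq v
    rw [hv, Fin.sum_univ_two] at h
    linarith
  refine ⟨fun v hv => ?_, fun b => ?_⟩
  · have hz : ‖(v 0 : ℂ) + (v 1 : ℂ) * Complex.I‖ = 1 := by
      rw [Complex.norm_add_mul_I, hsq v hv, Real.sqrt_one]
    have h := Complex.abs_re_le_norm (((v 0 : ℂ) + (v 1 : ℂ) * Complex.I) ^ n)
    rw [norm_pow, hz, one_pow, abs_le] at h
    rw [hg v hv]
    constructor <;> linarith [h.1, h.2]
  · have h0 : ‖b 0‖ = 1 := b.norm_eq_one 0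
    have h1 : ‖b 1‖ = 1 := b.norm_eq_one 1
    have horth : b 0 0 * b 1 0 + b 0 1 * b 1 1 = 0 := by
      have h : inner ℝ (b 0) (b 1) = 0 := b.inner_eq_zero (by decide)
      simp only [PiLp.inner_apply, Fin.sum_univ_two, RCLike.inner_apply, conj_trivial] at h
      linarith
    obtain ⟨m, rfl, hm⟩ : ∃ m, n = 2 * m ∧ Odd m :=
      ⟨n / 2, by omega, Nat.odd_iff.mpr (by omega)⟩
    rw [hg _ h0, hg _ h1, pow_mul _ 2 m, pow_mul _ 2 m,
      sq_eq_neg_sq_of_orthonormal (hsq _ h0) (hsq _ h1) horth, hm.neg_pow, Complex.neg_re]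
    ring
end

section
/- Let f : ℝ → ℝ be a bounded, non-negative, π/2-periodic function and let W ≥ sup f. Define g on the unit circle S^1 ⊆ ℝ² in the polar coordinate θ ∈ [0, 2π) by g(θ) = f(θ) if θ ∈ [0, π/2) ∪ [π, 3π/2), and g(θ) = W − f(θ) if θ ∈ [π/2, π) ∪ [3π/2, 2π). Then g is non-negative, and g is a Gleason function of weight W for the ONBs for ℝ²: for every orthonormal basis {u, v} of ℝ², g(u) + g(v) = W. -/
/-!
An orthonormal basis `{u, v}` of the plane satisfies `v = J u` or `u = J v`, where `J` is the
rotation by `π/2`, so it suffices to show `g u + g (J u) = W` for unit vectors `u`. In polar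
coordinates `J` is `θ ↦ θ + π/2` modulo `2π`: it exchanges the quadrants where `g = f` with those
where `g = W - f`, and `f` takes the same value at both angles by periodicity. Non-negativity
of `g` is immediate from `0 ≤ f ≤ W`.
-/

lemma exists_polar_angle {x y : ℝ} (h : x ^ 2 + y ^ 2 = 1) :
    ∃ θ ∈ Set.Ico (0 : ℝ) (2 * Real.pi), x = Real.cos θ ∧ y = Real.sin θ := by
  have hn : ‖(⟨x, y⟩ : ℂ)‖ = 1 := by
    rw [Complex.norm_eq_sqrt_sq_add_sq, h, Real.sqrt_one]
  have hz : (⟨x, y⟩ : ℂ) ≠ 0 := by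
    rw [← norm_ne_zero_iff, hn]; exact one_ne_zero
  have hc := Complex.cos_arg hz
  have hs := Complex.sin_arg (⟨x, y⟩ : ℂ)
  rw [hn, div_one] at hc hs
  have h1 := Complex.neg_pi_lt_arg (⟨x, y⟩ : ℂ)
  have h2 := Complex.arg_le_pi (⟨x, y⟩ : ℂ)
  have hp := Real.pi_pos
  rcases le_or_gt 0 (Complex.arg ⟨x, y⟩) with h0 | h0
  · exact ⟨_, ⟨h0, by linarith⟩, hc.symm, hs.symm⟩
  · refine ⟨Complex.arg ⟨x, y⟩ + 2 * Real.pi, ⟨by linarith, by linarith⟩, ?_, ?_⟩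
    · rw [Real.cos_add_two_pi, hc]
    · rw [Real.sin_add_two_pi, hs]

/-- Two orthogonal unit vectors of the plane differ by a quarter turn in one direction or the
other. -/
lemma quarter_turn_of_orthonormal {a b c d : ℝ} (h1 : a ^ 2 + b ^ 2 = 1)
    (h2 : c ^ 2 + d ^ 2 = 1) (h : a * c + b * d = 0) :
    (c = -b ∧ d = a) ∨ (a = -d ∧ b = c) := by
  -- `t` is the determinant of the pair, and `(c, d) = t • (-b, a)`.
  set t := a * d - b * c with ht
  have hc : c = t * -b := by rw [ht]; linear_combination a * h - c * h1
  have hd : d = t * a := by rw [ht]; linear_combination b * h - d * h1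
  have hsq : (t - 1) * (t + 1) = 0 := by
    rw [ht]
    linear_combination (c ^ 2 + d ^ 2) * h1 + h2 - (a * c + b * d) * h
  rcases mul_eq_zero.mp hsq with h' | h'
  · have : t = 1 := by linarith
    rw [this] at hc hd
    left; constructor <;> linarith
  · have : t = -1 := by linarith
    rw [this] at hc hd
    right; constructor <;> linarith

/-- Let `f : ℝ → ℝ` be bounded, non-negative, and `π/2`-periodic, and let
`W ≥ sup f`.  Define `g` on the unit circle in polar coordinates `θ ∈ [0, 2π)` by
`g(θ) = f(θ)` for `θ ∈ [0, π/2) ∪ [π, 3π/2)` and `g(θ) = W - f(θ)` for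
`θ ∈ [π/2, π) ∪ [3π/2, 2π)`.  Then `g` is non-negative on `S¹` and is a Gleason
function of weight `W` for the ONBs of `ℝ²`. -/
theorem stmt_5 (f : ℝ → ℝ) (hf_nonneg : ∀ t, 0 ≤ f t)
    (hf_bdd : ∃ C : ℝ, ∀ t, f t ≤ C)
    (hf_per : ∀ t, f (t + Real.pi / 2) = f t)
    (W : ℝ) (hW : ∀ t, f t ≤ W)
    (g : EuclideanSpace ℝ (Fin 2) → ℝ)
    (hg : ∀ θ ∈ Set.Ico (0 : ℝ) (2 * Real.pi),
      g ((EuclideanSpace.equiv (Fin 2) ℝ).symm ![Real.cos θ, Real.sin θ]) =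
        if θ ∈ Set.Ico (0 : ℝ) (Real.pi / 2) ∪ Set.Ico Real.pi (3 * Real.pi / 2)
        then f θ else W - f θ) :
    (∀ v : EuclideanSpace ℝ (Fin 2), ‖v‖ = 1 → 0 ≤ g v) ∧
    (∀ b : OrthonormalBasis (Fin 2) ℝ (EuclideanSpace ℝ (Fin 2)),
      g (b 0) + g (b 1) = W) := by
  have hp := Real.pi_pos
  have hsq : ∀ v : EuclideanSpace ℝ (Fin 2), ‖v‖ = 1 → v 0 ^ 2 + v 1 ^ 2 = 1 := by
    intro v hv
    have := EuclideanSpace.norm_sq_eq v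
    rw [hv] at this
    simpa [Fin.sum_univ_two] using this.symm
  have hmk : ∀ (v : EuclideanSpace ℝ (Fin 2)) (x y : ℝ), v 0 = x → v 1 = y →
      v = (EuclideanSpace.equiv (Fin 2) ℝ).symm ![x, y] := by
    intro v x y hx hy
    ext i
    fin_cases i
    · simpa using hx
    · simpa using hy
  have key : ∀ u w : EuclideanSpace ℝ (Fin 2), ‖u‖ = 1 → w 0 = -u 1 → w 1 = u 0 →
      g u + g w = W := by
    intro u w hu h0 h1
    obtain ⟨θ, hθ, hc, hs⟩ := exists_polar_angle (hsq u hu)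
    rw [hmk u _ _ hc hs, hg θ hθ]
    rw [hs] at h0
    rw [hc] at h1
    obtain ⟨hθ0, hθ1⟩ := hθ
    by_cases hlt : θ < 3 * Real.pi / 2
    · rw [hmk w (Real.cos (θ + Real.pi / 2)) (Real.sin (θ + Real.pi / 2))
        (by rw [h0, Real.cos_add_pi_div_two]) (by rw [h1, Real.sin_add_pi_div_two]),
        hg _ ⟨by linarith, by linarith⟩, hf_per]
      simp only [Set.mem_union, Set.mem_Ico]
      split_ifs <;> grind
    -- In the last quadrant the turned angle is represented by `θ + π/2 - 2π`.
    · have hf : f (θ + Real.pi / 2 - 2 * Real.pi) = f θ := by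
        have e1 := hf_per (θ + Real.pi / 2 - 2 * Real.pi)
        have e2 := hf_per (θ + Real.pi / 2 - 2 * Real.pi + Real.pi / 2)
        have e3 := hf_per (θ + Real.pi / 2 - 2 * Real.pi + Real.pi / 2 + Real.pi / 2)
        rw [← e1, ← e2, ← e3]
        congr 1
        ring
      rw [hmk w (Real.cos (θ + Real.pi / 2 - 2 * Real.pi))
        (Real.sin (θ + Real.pi / 2 - 2 * Real.pi))
        (by rw [h0, Real.cos_sub_two_pi, Real.cos_add_pi_div_two])
        (by rw [h1, Real.sin_sub_two_pi, Real.sin_add_pi_div_two]),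
        hg _ ⟨by linarith, by linarith⟩, hf]
      simp only [Set.mem_union, Set.mem_Ico]
      split_ifs <;> grind
  refine ⟨fun v hv => ?_, fun b => ?_⟩
  · obtain ⟨θ, hθ, hc, hs⟩ := exists_polar_angle (hsq v hv)
    rw [hmk v _ _ hc hs, hg θ hθ]
    split_ifs
    · exact hf_nonneg θ
    · exact sub_nonneg.mpr (hW θ)
  · have n0 := b.orthonormal.1 0
    have n1 := b.orthonormal.1 1
    have horth : b 0 0 * b 1 0 + b 0 1 * b 1 1 = 0 := by
      have : inner ℝ (b 0) (b 1) = 0 := b.orthonormal.2 (zero_ne_one (α := Fin 2))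
      rw [PiLp.inner_apply, Fin.sum_univ_two] at this
      simp only [RCLike.inner_apply, conj_trivial] at this
      linarith
    rcases quarter_turn_of_orthonormal (hsq _ n0) (hsq _ n1) horth with ⟨e0, e1⟩ | ⟨e0, e1⟩
    · exact key _ _ n0 e0 e1
    · rw [add_comm]
      exact key _ _ n1 e0 e1
end
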